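/- arXiv:2512.21162 — 2 statements merged into one kernel-verified Lean document; each statement's English description precedes it below -/
import Mathlib

section
/- Let 2 ≤ s < ∞, let A be a symmetric positive definite real n×n matrix, and define H(ξ) := (|ξ|_s^p + |ξ|_A^p)^{1/p}. Then H is a norm on ℝⁿ, and there exists a constant C > 0 such that for all ξ, η ∈ ℝⁿ with (ξ,η) ≠ (0,0): H(ξ+η)^p − H(ξ)^p − p·|ξ|_s^{p−s}·∑_{i=1}^n |ξᵢ|^{s−2} ξᵢ ηᵢ − p·|ξ|_A^{p−2}·⟪Aξ, η⟫ ≤ C·H(η)²·(H(ξ) + H(η))^{p−2}, where the two subtracted gradient terms are interpreted as 0 when ξ = 0. -/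
open scoped Classical

open Matrix

lemma bregman_bound {p q B K : ℝ} (hp : 1 < p) (hq : 1 < q) (hB : 0 ≤ B) (hK : 0 ≤ K) :
    ∃ C : ℝ, 0 < C ∧ ∀ a t z L : ℝ, 0 ≤ a → 0 ≤ t → 0 ≤ z → z ≤ a + t →
      |L| ≤ B * a ^ (q - 1) * t →
      (t ≤ a → z ^ q ≤ a ^ q + q * L + K * a ^ (q - 2) * t ^ 2) →
      z ^ p - a ^ p - p * a ^ (p - q) * L ≤ C * t ^ 2 * (a + t) ^ (p - 2) := by
  set E := p * (B + K) with hE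
  have hE0 : 0 ≤ E := by positivity
  refine ⟨(1 + p * B) * (2 + E) ^ 2 + 2 * (p * K + E ^ 2), by positivity, ?_⟩
  intro a t z L ha ht hz hzat hL hsmooth
  rcases eq_or_lt_of_le (add_nonneg ha ht) with h0 | hat
  · obtain rfl : a = 0 := by linarith
    obtain rfl : t = 0 := by linarith
    obtain rfl : z = 0 := by linarith
    obtain rfl : L = 0 := by simpa using hL
    simp
  have hat2 : (a + t) ^ p = (a + t) ^ 2 * (a + t) ^ (p - 2) := by
    rw [← Real.rpow_natCast, ← Real.rpow_add hat]; congr 1; push_cast; ring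
  have hR : 0 ≤ (a + t) ^ (p - 2) := by positivity
  rcases le_or_gt a ((1 + E) * t) with hfar | hnear
  · have h1 : z ^ p ≤ (a + t) ^ p := Real.rpow_le_rpow hz hzat (by linarith)
    have h2 : -(p * a ^ (p - q) * L) ≤ p * B * (a + t) ^ p := by
      rcases eq_or_lt_of_le ha with rfl | ha'
      · obtain rfl : L = 0 := by
          rw [Real.zero_rpow (by linarith)] at hL
          simpa using hL
        have : 0 ≤ p * B * (0 + t) ^ p := by positivity
        simpa using this
      · have h3 : a ^ (p - q) * a ^ (q - 1) = a ^ (p - 1) := by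
          rw [← Real.rpow_add ha']; congr 1; ring
        have h4 : a ^ (p - 1) ≤ (a + t) ^ (p - 1) :=
          Real.rpow_le_rpow ha (by linarith) (by linarith)
        have h5 : (a + t) ^ p = (a + t) ^ (p - 1) * (a + t) := by
          rw [← Real.rpow_add_one hat.ne']; congr 1; ring
        calc -(p * a ^ (p - q) * L) = p * a ^ (p - q) * (-L) := by ring
          _ ≤ p * a ^ (p - q) * (B * a ^ (q - 1) * t) := by
            gcongr
            exact (neg_le_abs L).trans hL
          _ = p * B * (a ^ (p - 1) * t) := by rw [← h3]; ring
          _ ≤ p * B * ((a + t) ^ (p - 1) * (a + t)) := by gcongr; linarith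
          _ = _ := by rw [h5]
    have h6 : (a + t) ^ 2 ≤ (2 + E) ^ 2 * t ^ 2 := by
      rw [← mul_pow]; gcongr; linarith
    have h7 : 0 ≤ a ^ p := by positivity
    calc z ^ p - a ^ p - p * a ^ (p - q) * L ≤ (1 + p * B) * (a + t) ^ p := by linarith
      _ = (1 + p * B) * ((a + t) ^ 2 * (a + t) ^ (p - 2)) := by rw [hat2]
      _ ≤ (1 + p * B) * ((2 + E) ^ 2 * t ^ 2 * (a + t) ^ (p - 2)) := by gcongr
      _ ≤ (1 + p * B) * ((2 + E) ^ 2 * t ^ 2 * (a + t) ^ (p - 2))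
          + 2 * (p * K + E ^ 2) * t ^ 2 * (a + t) ^ (p - 2) := by
        have : 0 ≤ 2 * (p * K + E ^ 2) * t ^ 2 * (a + t) ^ (p - 2) := by positivity
        linarith
      _ = _ := by ring
  · have hta : t ≤ a := by nlinarith
    have ha' : 0 < a := by nlinarith
    have hq0 : 0 < q := by linarith
    obtain ⟨l, rfl⟩ : ∃ l, L = a ^ q * l := ⟨L / a ^ q, by field_simp⟩
    obtain ⟨x, rfl⟩ : ∃ x, t = a * x := ⟨t / a, by field_simp⟩
    have hx : 0 ≤ x := nonneg_of_mul_nonneg_right ht ha'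
    have hx1 : x ≤ 1 := by nlinarith
    have hEx : E * x ≤ 1 := by nlinarith
    have e1 : a ^ (q - 1) * a = a ^ q := by rw [← Real.rpow_add_one ha'.ne']; congr 1; ring
    have e2 (r : ℝ) : a ^ (r - 2) * a ^ 2 = a ^ r := by
      rw [← Real.rpow_natCast, ← Real.rpow_add ha']; congr 1; push_cast; ring
    have e3 : a ^ (p - q) * a ^ q = a ^ p := by rw [← Real.rpow_add ha']; congr 1; ring
    have hl : |l| ≤ B * x := by
      rw [abs_mul, abs_of_pos (by positivity)] at hL
      have : a ^ q * |l| ≤ a ^ q * (B * x) := by rw [← e1] at hL ⊢; linarith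
      exact le_of_mul_le_mul_left this (by positivity)
    set v := p * l + p / q * K * x ^ 2 with hv
    have hvE : |v| ≤ E * x := by
      have h1 : p / q ≤ p := div_le_self (by linarith) hq.le
      calc |v| ≤ |p * l| + |p / q * K * x ^ 2| := abs_add_le _ _
        _ = p * |l| + p / q * K * x ^ 2 := by
          rw [abs_mul, abs_of_pos (by linarith : 0 < p),
            abs_of_nonneg (by positivity : 0 ≤ p / q * K * x ^ 2)]
        _ ≤ p * (B * x) + p * K * (x * 1) := by
          rw [sq]; gcongr
        _ = E * x := by rw [hE]; ring
    have h1 : z ^ q ≤ a ^ q * Real.exp (q / p * v) := by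
      calc z ^ q ≤ a ^ q + q * (a ^ q * l) + K * a ^ (q - 2) * (a * x) ^ 2 := hsmooth hta
        _ = a ^ q + q * (a ^ q * l) + K * x ^ 2 * (a ^ (q - 2) * a ^ 2) := by ring
        _ = a ^ q * (q / p * v + 1) := by rw [e2, hv]; field_simp; ring
        _ ≤ _ := by gcongr; exact Real.add_one_le_exp _
    have h2 : z ^ p ≤ a ^ p * Real.exp v := by
      have := Real.rpow_le_rpow (by positivity) h1 (by positivity : 0 ≤ p / q)
      rw [Real.mul_rpow (by positivity) (by positivity), ← Real.rpow_mul hz, ← Real.rpow_mul ha,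
        ← Real.exp_mul] at this
      convert this using 2
      · field_simp
      · congr 1; field_simp
      · congr 1; field_simp
    have h3 : Real.exp v ≤ 1 + v + (E * x) ^ 2 := by
      have := (abs_le.1 (Real.abs_exp_sub_one_sub_id_le (hvE.trans hEx))).2
      have h4 : v ^ 2 ≤ (E * x) ^ 2 := sq_le_sq' (abs_le.1 hvE).1 (abs_le.1 hvE).2
      linarith
    have h5 : a ^ (p - 2) ≤ 2 * (a + a * x) ^ (p - 2) := by
      rcases le_total 2 p with h | h
      · have : a ^ (p - 2) ≤ (a + a * x) ^ (p - 2) :=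
          Real.rpow_le_rpow ha (by linarith) (by linarith)
        linarith
      · have h6 : (2 * a) ^ (p - 2) ≤ (a + a * x) ^ (p - 2) :=
          Real.rpow_le_rpow_of_nonpos hat (by linarith) (by linarith)
        rw [Real.mul_rpow (by norm_num) ha] at h6
        have h7 : (2 : ℝ) ^ (-1 : ℝ) ≤ 2 ^ (p - 2) :=
          Real.rpow_le_rpow_of_exponent_le (by norm_num) (by linarith)
        rw [Real.rpow_neg_one] at h7
        have h8 : 0 ≤ a ^ (p - 2) := by positivity
        nlinarith
    have h9 : p / q * K ≤ p * K := by gcongr; exact div_le_self (by linarith) hq.le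
    calc z ^ p - a ^ p - p * a ^ (p - q) * (a ^ q * l)
        = z ^ p - a ^ p - p * l * (a ^ (p - q) * a ^ q) := by ring
      _ ≤ a ^ p * (1 + v + (E * x) ^ 2) - a ^ p - p * l * a ^ p := by
        rw [e3]; gcongr; exact h2.trans (by gcongr)
      _ = a ^ p * ((p / q * K + E ^ 2) * x ^ 2) := by rw [hv]; ring
      _ ≤ a ^ p * ((p * K + E ^ 2) * x ^ 2) := by gcongr
      _ = (p * K + E ^ 2) * (a * x) ^ 2 * a ^ (p - 2) := by rw [← e2 p]; ring
      _ ≤ (p * K + E ^ 2) * (a * x) ^ 2 * (2 * (a + a * x) ^ (p - 2)) := by gcongr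
      _ ≤ (1 + p * B) * (2 + E) ^ 2 * (a * x) ^ 2 * (a + a * x) ^ (p - 2)
          + (p * K + E ^ 2) * (a * x) ^ 2 * (2 * (a + a * x) ^ (p - 2)) :=
        le_add_of_nonneg_left (by positivity)
      _ = _ := by ring

lemma abs_add_rpow_bound {s : ℝ} (hs : 2 ≤ s) :
    ∃ C : ℝ, 0 < C ∧ ∀ x y : ℝ,
      |x + y| ^ s ≤ |x| ^ s + s * (|x| ^ (s - 2) * x * y)
        + C * |y| ^ 2 * (|x| + |y|) ^ (s - 2) := by
  obtain ⟨C, hC, h⟩ := bregman_bound (p := s) (q := 2) (B := 1) (K := 1) (by linarith)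
    (by norm_num) (by norm_num) (by norm_num)
  refine ⟨C, hC, fun x y => ?_⟩
  have := h |x| |y| |x + y| (x * y) (abs_nonneg _) (abs_nonneg _) (abs_nonneg _)
    (abs_add_le _ _) (by norm_num [abs_mul]) (fun _ => by norm_num; nlinarith)
  linarith

lemma sq_mul_rpow_le_of_comparable {p D a t a' t' : ℝ} (hp : 1 < p) (hD : 1 ≤ D)
    (ha : 0 ≤ a) (ht : 0 ≤ t) (haa' : a ≤ a') (htt' : t ≤ t')
    (haD : a' ≤ D * a) (htD : t' ≤ D * t) :
    t ^ 2 * (a + t) ^ (p - 2) ≤ D * t' ^ 2 * (a' + t') ^ (p - 2) := by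
  have hD0 : 0 < D := by linarith
  have ha'0 : 0 ≤ a' := ha.trans haa'
  have ht'0 : 0 ≤ t' := ht.trans htt'
  rcases eq_or_lt_of_le ht with rfl | ht0
  · have : 0 ≤ D * t' ^ 2 * (a' + t') ^ (p - 2) := by positivity
    simpa using this
  have hat : 0 < a + t := by linarith
  have key : (a + t) ^ (p - 2) ≤ D * (a' + t') ^ (p - 2) := by
    rcases le_total 2 p with h | h
    · have h1 : (a + t) ^ (p - 2) ≤ (a' + t') ^ (p - 2) :=
        Real.rpow_le_rpow hat.le (by linarith) (by linarith)
      have h2 : 0 ≤ (a' + t') ^ (p - 2) := by positivity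
      nlinarith
    · have h1 : (D * (a + t)) ^ (p - 2) ≤ (a' + t') ^ (p - 2) :=
        Real.rpow_le_rpow_of_nonpos (by linarith) (by linarith) (by linarith)
      rw [Real.mul_rpow (by linarith) hat.le] at h1
      have h2 : D ^ (-1 : ℝ) ≤ D ^ (p - 2) :=
        Real.rpow_le_rpow_of_exponent_le hD (by linarith)
      rw [Real.rpow_neg_one] at h2
      calc (a + t) ^ (p - 2) = D * (D⁻¹ * (a + t) ^ (p - 2)) := by field_simp
        _ ≤ D * (D ^ (p - 2) * (a + t) ^ (p - 2)) := by gcongr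
        _ ≤ _ := by gcongr
  calc t ^ 2 * (a + t) ^ (p - 2) ≤ t' ^ 2 * (D * (a' + t') ^ (p - 2)) := by gcongr
    _ = _ := by ring

section Lp

variable {ι : Type*} [Fintype ι]

lemma abs_le_lp_norm {s : ℝ} (hs : 0 < s) (ζ : ι → ℝ) (i : ι) :
    |ζ i| ≤ (∑ j, |ζ j| ^ s) ^ (1 / s) := by
  rw [one_div, Real.le_rpow_inv_iff_of_pos (abs_nonneg _) (by positivity) hs]
  exact Finset.single_le_sum (f := fun j => |ζ j| ^ s) (fun j _ => by positivity)
    (Finset.mem_univ i)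

lemma lp_norm_le {s m : ℝ} (hs : 0 < s) (hm : 0 ≤ m) {ζ : ι → ℝ} (h : ∀ i, |ζ i| ≤ m) :
    (∑ j, |ζ j| ^ s) ^ (1 / s) ≤ (Fintype.card ι : ℝ) ^ (1 / s) * m := by
  calc (∑ j, |ζ j| ^ s) ^ (1 / s) ≤ (∑ _j : ι, m ^ s) ^ (1 / s) := by
        gcongr with j; exact h j
    _ = _ := by
      rw [Finset.sum_const, Finset.card_univ, nsmul_eq_mul,
        Real.mul_rpow (by positivity) (by positivity), one_div, Real.rpow_rpow_inv hm hs.ne']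

lemma abs_lp_pairing_le {s a t : ℝ} (hs : 2 ≤ s) (ha : 0 ≤ a) {ξ η : ι → ℝ}
    (hξ : ∀ i, |ξ i| ≤ a) (hη : ∀ i, |η i| ≤ t) :
    |∑ i, |ξ i| ^ (s - 2) * ξ i * η i| ≤ Fintype.card ι * a ^ (s - 1) * t := by
  have e : a ^ (s - 2) * a = a ^ (s - 1) := by
    rcases eq_or_lt_of_le ha with rfl | h
    · rw [mul_zero, Real.zero_rpow (by linarith)]
    · rw [← Real.rpow_add_one h.ne']; congr 1; ring
  calc |∑ i, |ξ i| ^ (s - 2) * ξ i * η i| ≤ ∑ i, |(|ξ i| ^ (s - 2) * ξ i * η i)| :=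
        Finset.abs_sum_le_sum_abs _ _
    _ ≤ ∑ _i : ι, a ^ (s - 2) * a * t := by
      refine Finset.sum_le_sum fun i _ => ?_
      rw [abs_mul, abs_mul, abs_of_nonneg (by positivity : 0 ≤ |ξ i| ^ (s - 2))]
      gcongr
      · exact hξ i
      · exact hξ i
      · exact hη i
    _ = _ := by rw [Finset.sum_const, Finset.card_univ, nsmul_eq_mul, e]; ring

lemma exists_lp_smooth (ι : Type*) [Fintype ι] {s : ℝ} (hs : 2 ≤ s) :
    ∃ K : ℝ, 0 ≤ K ∧ ∀ (ξ η : ι → ℝ) (a t : ℝ), 0 ≤ a → t ≤ a →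
      (∀ i, |ξ i| ≤ a) → (∀ i, |η i| ≤ t) →
      ∑ i, |ξ i + η i| ^ s ≤ ∑ i, |ξ i| ^ s + s * ∑ i, |ξ i| ^ (s - 2) * ξ i * η i
        + K * a ^ (s - 2) * t ^ 2 := by
  obtain ⟨C, hC, h⟩ := abs_add_rpow_bound hs
  refine ⟨Fintype.card ι * (C * 2 ^ (s - 2)), by positivity, ?_⟩
  intro ξ η a t ha hta hξ hη
  calc ∑ i, |ξ i + η i| ^ s
      ≤ ∑ i, (|ξ i| ^ s + s * (|ξ i| ^ (s - 2) * ξ i * η i) + C * t ^ 2 * (2 * a) ^ (s - 2)) := by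
        refine Finset.sum_le_sum fun i _ => (h (ξ i) (η i)).trans ?_
        have h1 := hξ i
        have h2 := hη i
        gcongr
        linarith
    _ = _ := by
      rw [Finset.sum_add_distrib, Finset.sum_add_distrib, ← Finset.mul_sum, Finset.sum_const,
        Finset.card_univ, nsmul_eq_mul, Real.mul_rpow (by norm_num) ha]
      ring

end Lp

section Quadratic

variable {ι : Type*} [Fintype ι] {A : Matrix ι ι ℝ}

lemma mulVec_dotProduct_symm (hA : A.IsSymm) (ξ η : ι → ℝ) :
    A.mulVec ξ ⬝ᵥ η = A.mulVec η ⬝ᵥ ξ := by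
  rw [dotProduct_comm, dotProduct_mulVec, ← mulVec_transpose, hA.eq]

lemma mulVec_dotProduct_self_nonneg (hA : A.PosDef) (ξ : ι → ℝ) : 0 ≤ A.mulVec ξ ⬝ᵥ ξ := by
  rcases eq_or_ne ξ 0 with rfl | h
  · simp
  · simpa [dotProduct_comm] using (hA.dotProduct_mulVec_pos h).le

lemma quadratic_add (hA : A.IsSymm) (ξ η : ι → ℝ) :
    A.mulVec (ξ + η) ⬝ᵥ (ξ + η)
      = A.mulVec ξ ⬝ᵥ ξ + 2 * (A.mulVec ξ ⬝ᵥ η) + A.mulVec η ⬝ᵥ η := by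
  rw [mulVec_add, add_dotProduct, dotProduct_add, dotProduct_add,
    mulVec_dotProduct_symm hA η ξ]
  ring

lemma quadratic_smul (c : ℝ) (ξ : ι → ℝ) :
    A.mulVec (c • ξ) ⬝ᵥ (c • ξ) = c ^ 2 * (A.mulVec ξ ⬝ᵥ ξ) := by
  rw [mulVec_smul, smul_dotProduct, dotProduct_smul, smul_eq_mul, smul_eq_mul]
  ring

lemma abs_mulVec_dotProduct_le (hA : A.IsSymm) (hA' : A.PosDef) (ξ η : ι → ℝ) :
    |A.mulVec ξ ⬝ᵥ η| ≤ √(A.mulVec ξ ⬝ᵥ ξ) * √(A.mulVec η ⬝ᵥ η) := by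
  rw [← Real.sqrt_mul (mulVec_dotProduct_self_nonneg hA' ξ)]
  refine Real.abs_le_sqrt ?_
  have h := discrim_le_zero (a := A.mulVec η ⬝ᵥ η) (b := 2 * (A.mulVec ξ ⬝ᵥ η))
    (c := A.mulVec ξ ⬝ᵥ ξ) fun x => by
      have h1 := mulVec_dotProduct_self_nonneg hA' (ξ + x • η)
      rw [quadratic_add hA, quadratic_smul, dotProduct_smul, smul_eq_mul] at h1
      linarith
  rw [discrim] at h
  linarith

lemma sqrt_quadratic_add_le (hA : A.IsSymm) (hA' : A.PosDef) (ξ η : ι → ℝ) :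
    √(A.mulVec (ξ + η) ⬝ᵥ (ξ + η)) ≤ √(A.mulVec ξ ⬝ᵥ ξ) + √(A.mulVec η ⬝ᵥ η) := by
  refine Real.sqrt_le_iff.2 ⟨by positivity, ?_⟩
  have h := (le_abs_self _).trans (abs_mulVec_dotProduct_le hA hA' ξ η)
  rw [quadratic_add hA, add_sq, Real.sq_sqrt (mulVec_dotProduct_self_nonneg hA' ξ),
    Real.sq_sqrt (mulVec_dotProduct_self_nonneg hA' η)]
  linarith

lemma exists_sqrt_quadratic_le (A : Matrix ι ι ℝ) :
    ∃ D : ℝ, 0 ≤ D ∧ ∀ (ζ : ι → ℝ) (m : ℝ), 0 ≤ m → (∀ i, |ζ i| ≤ m) →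
      √(A.mulVec ζ ⬝ᵥ ζ) ≤ D * m := by
  refine ⟨√(∑ i, ∑ j, |A i j|), by positivity, fun ζ m hm h => ?_⟩
  rw [← Real.sqrt_sq hm, ← Real.sqrt_mul (by positivity)]
  refine Real.sqrt_le_sqrt ?_
  simp only [dotProduct, mulVec, Finset.sum_mul]
  refine Finset.sum_le_sum fun i _ => Finset.sum_le_sum fun j _ => ?_
  calc A i j * ζ j * ζ i ≤ |A i j * ζ j * ζ i| := le_abs_self _
    _ = |A i j| * (|ζ j| * |ζ i|) := by rw [abs_mul, abs_mul, mul_assoc]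
    _ ≤ |A i j| * (m * m) := by gcongr <;> exact h _
    _ = _ := by rw [sq]

lemma exists_abs_le_sqrt_quadratic (hA : A.IsSymm) (hA' : A.PosDef) :
    ∃ D : ℝ, 0 ≤ D ∧ ∀ (ζ : ι → ℝ) (i : ι), |ζ i| ≤ D * √(A.mulVec ζ ⬝ᵥ ζ) := by
  classical
  set e : ι → ι → ℝ := fun i => A⁻¹.mulVec (Pi.single i 1) with he
  refine ⟨∑ i, √(A.mulVec (e i) ⬝ᵥ e i), by positivity, fun ζ i => ?_⟩
  have h1 : A.mulVec (e i) ⬝ᵥ ζ = ζ i := by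
    rw [he, mulVec_mulVec, mul_nonsing_inv _ ((isUnit_iff_isUnit_det A).1 hA'.isUnit),
      one_mulVec, single_one_dotProduct]
  calc |ζ i| = |A.mulVec (e i) ⬝ᵥ ζ| := by rw [h1]
    _ ≤ √(A.mulVec (e i) ⬝ᵥ e i) * √(A.mulVec ζ ⬝ᵥ ζ) := abs_mulVec_dotProduct_le hA hA' _ _
    _ ≤ _ := by
      gcongr
      exact Finset.single_le_sum (f := fun j => √(A.mulVec (e j) ⬝ᵥ e j))
        (fun j _ => Real.sqrt_nonneg _) (Finset.mem_univ i)

end Quadratic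

/-- `H(ξ) := (|ξ|_s^p + |ξ|_A^p)^{1/p}` is a norm on `ℝⁿ`
satisfying the upper Bregman-distance estimate of Assumption `assup`. -/
theorem stmt_9 (n : ℕ) (hn : 2 ≤ n) (p s : ℝ) (hp : 1 < p) (hs : 2 ≤ s)
    (A : Matrix (Fin n) (Fin n) ℝ) (hAsymm : A.IsSymm) (hApos : A.PosDef)
    (ns na Hn : (Fin n → ℝ) → ℝ)
    (hns : ∀ ζ, ns ζ = (∑ i, |ζ i| ^ s) ^ (1 / s))
    (hna : ∀ ζ, na ζ = Real.sqrt (A.mulVec ζ ⬝ᵥ ζ))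
    (hHn : ∀ ζ, Hn ζ = (ns ζ ^ p + na ζ ^ p) ^ (1 / p)) :
    (∀ ξ, 0 ≤ Hn ξ) ∧
    (∀ ξ, Hn ξ = 0 ↔ ξ = 0) ∧
    (∀ (c : ℝ) (ξ : Fin n → ℝ), Hn (c • ξ) = |c| * Hn ξ) ∧
    (∀ ξ η, Hn (ξ + η) ≤ Hn ξ + Hn η) ∧
    ∃ C : ℝ, 0 < C ∧ ∀ ξ η : Fin n → ℝ, ¬(ξ = 0 ∧ η = 0) →
      Hn (ξ + η) ^ p - Hn ξ ^ p
          - (if ξ = 0 then 0 else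
              p * ns ξ ^ (p - s) * ∑ i, |ξ i| ^ (s - 2) * ξ i * η i)
          - (if ξ = 0 then 0 else p * na ξ ^ (p - 2) * (A.mulVec ξ ⬝ᵥ η))
        ≤ C * Hn η ^ 2 * (Hn ξ + Hn η) ^ (p - 2) := by
  have hp0 : 0 < p := by linarith
  have hs0 : 0 < s := by linarith
  have ns0 ζ : 0 ≤ ns ζ := by rw [hns]; positivity
  have na0 ζ : 0 ≤ na ζ := by rw [hna]; positivity
  have Hn0 ζ : 0 ≤ Hn ζ := by
    have := ns0 ζ
    have := na0 ζ
    rw [hHn]; positivity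
  have Hnp ζ : Hn ζ ^ p = ns ζ ^ p + na ζ ^ p := by
    have := ns0 ζ
    have := na0 ζ
    rw [hHn, one_div, Real.rpow_inv_rpow (by positivity) hp0.ne']
  have nsH ζ : ns ζ ≤ Hn ζ := by
    rw [← Real.rpow_le_rpow_iff (ns0 ζ) (Hn0 ζ) hp0, Hnp]
    have := na0 ζ
    exact le_add_of_nonneg_right (by positivity)
  have naH ζ : na ζ ≤ Hn ζ := by
    rw [← Real.rpow_le_rpow_iff (na0 ζ) (Hn0 ζ) hp0, Hnp]
    have := ns0 ζ
    exact le_add_of_nonneg_left (by positivity)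
  have Hle ζ : Hn ζ ≤ ns ζ + na ζ := by
    rw [hHn]; exact Real.rpow_add_rpow_le_add (ns0 ζ) (na0 ζ) hp.le
  have coord ζ i : |ζ i| ≤ ns ζ := by rw [hns]; exact abs_le_lp_norm hs0 ζ i
  have ns_smul (c : ℝ) ζ : ns (c • ζ) = |c| * ns ζ := by
    simp only [hns, Pi.smul_apply, smul_eq_mul, abs_mul]
    simp_rw [Real.mul_rpow (abs_nonneg c) (abs_nonneg _)]
    rw [← Finset.mul_sum, Real.mul_rpow (by positivity) (by positivity), one_div,
      Real.rpow_rpow_inv (abs_nonneg c) hs0.ne']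
  have na_smul (c : ℝ) ζ : na (c • ζ) = |c| * na ζ := by
    rw [hna, hna, quadratic_smul, Real.sqrt_mul (sq_nonneg c), Real.sqrt_sq_eq_abs]
  have H_smul (c : ℝ) ζ : Hn (c • ζ) = |c| * Hn ζ := by
    have h1 := ns0 ζ
    have h2 := na0 ζ
    rw [hHn, hHn, ns_smul, na_smul, Real.mul_rpow (abs_nonneg c) h1,
      Real.mul_rpow (abs_nonneg c) h2, ← mul_add, Real.mul_rpow (by positivity) (by positivity),
      one_div, Real.rpow_rpow_inv (abs_nonneg c) hp0.ne']
  have ns_add ξ η : ns (ξ + η) ≤ ns ξ + ns η := by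
    simpa only [hns, Pi.add_apply] using
      Real.Lp_add_le Finset.univ ξ η (by linarith : (1 : ℝ) ≤ s)
  have na_add ξ η : na (ξ + η) ≤ na ξ + na η := by
    simpa only [hna] using sqrt_quadratic_add_le hAsymm hApos ξ η
  have H_add ξ η : Hn (ξ + η) ≤ Hn ξ + Hn η := by
    have hnn ζ : ∀ i ∈ (Finset.univ : Finset (Fin 2)), 0 ≤ ![ns ζ, na ζ] i := by
      intro i _
      fin_cases i
      · exact ns0 ζ
      · exact na0 ζ
    have h := Real.Lp_add_le_of_nonneg Finset.univ hp.le (hnn ξ) (hnn η)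
    simp only [Fin.sum_univ_two, cons_val_zero, cons_val_one] at h
    rw [← hHn, ← hHn] at h
    refine le_trans ?_ h
    have h1 := ns0 (ξ + η)
    have h2 := na0 (ξ + η)
    rw [hHn]
    gcongr
    · exact ns_add ξ η
    · exact na_add ξ η
  have H_zero ζ : Hn ζ = 0 ↔ ζ = 0 := by
    refine ⟨fun h => funext fun i => ?_, ?_⟩
    · exact abs_nonpos_iff.1 (((coord ζ i).trans (nsH ζ)).trans h.le)
    · rintro rfl
      simpa using H_smul 0 0
  refine ⟨Hn0, H_zero, H_smul, H_add, ?_⟩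
  obtain ⟨D₁, hD₁, hnaD⟩ := exists_sqrt_quadratic_le A
  obtain ⟨D₂, hD₂, hnsD⟩ := exists_abs_le_sqrt_quadratic hAsymm hApos
  set D₃ := (Fintype.card (Fin n) : ℝ) ^ (1 / s) * D₂ with hD₃
  have hD₃0 : 0 ≤ D₃ := by positivity
  set D := 1 + D₁ + D₃ with hD
  have hD1 : 1 ≤ D := by linarith
  have HDs ζ : Hn ζ ≤ D * ns ζ := by
    have h1 : na ζ ≤ D₁ * ns ζ := by rw [hna]; exact hnaD ζ _ (ns0 ζ) (coord ζ)
    have := mul_nonneg hD₃0 (ns0 ζ)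
    rw [hD]
    linarith [Hle ζ]
  have HDa ζ : Hn ζ ≤ D * na ζ := by
    have h1 : ns ζ ≤ D₃ * na ζ := by
      rw [hns, hD₃, mul_assoc]
      exact lp_norm_le hs0 (mul_nonneg hD₂ (na0 ζ)) fun i => by rw [hna]; exact hnsD ζ i
    have := mul_nonneg hD₁ (na0 ζ)
    rw [hD]
    linarith [Hle ζ]
  obtain ⟨K, hK, hsmooth⟩ := exists_lp_smooth (Fin n) hs
  obtain ⟨C₁, hC₁, hb₁⟩ := bregman_bound (q := s) (B := Fintype.card (Fin n)) hp (by linarith)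
    (by positivity) hK
  obtain ⟨C₂, hC₂, hb₂⟩ := bregman_bound (q := 2) (B := 1) (K := 1) hp (by norm_num)
    (by norm_num) (by norm_num)
  refine ⟨(C₁ + C₂) * D, by positivity, fun ξ η _ => ?_⟩
  have nsp ζ : ns ζ ^ s = ∑ i, |ζ i| ^ s := by
    rw [hns, one_div, Real.rpow_inv_rpow (by positivity) hs0.ne']
  have nap ζ : na ζ ^ (2 : ℝ) = A.mulVec ζ ⬝ᵥ ζ := by
    rw [hna, Real.rpow_two, Real.sq_sqrt (mulVec_dotProduct_self_nonneg hApos ζ)]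
  have b₁ := hb₁ (ns ξ) (ns η) (ns (ξ + η)) (∑ i, |ξ i| ^ (s - 2) * ξ i * η i)
    (ns0 _) (ns0 _) (ns0 _) (ns_add ξ η)
    (abs_lp_pairing_le hs (ns0 ξ) (coord ξ) (coord η))
    (fun h => by
      rw [nsp, nsp]; exact hsmooth ξ η _ _ (ns0 ξ) h (coord ξ) (coord η))
  have b₂ := hb₂ (na ξ) (na η) (na (ξ + η)) (A.mulVec ξ ⬝ᵥ η)
    (na0 _) (na0 _) (na0 _) (na_add ξ η)
    (by
      have := abs_mulVec_dotProduct_le hAsymm hApos ξ η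
      rw [← hna, ← hna] at this
      norm_num
      exact this)
    (fun _ => by
      rw [nap, nap, quadratic_add hAsymm, ← nap η]
      norm_num)
  have c₁ := sq_mul_rpow_le_of_comparable hp hD1 (ns0 ξ) (ns0 η) (nsH ξ) (nsH η) (HDs ξ) (HDs η)
  have c₂ := sq_mul_rpow_le_of_comparable hp hD1 (na0 ξ) (na0 η) (naH ξ) (naH η) (HDa ξ) (HDa η)
  have g₁ : (if ξ = 0 then 0 else p * ns ξ ^ (p - s) * ∑ i, |ξ i| ^ (s - 2) * ξ i * η i)
      = p * ns ξ ^ (p - s) * ∑ i, |ξ i| ^ (s - 2) * ξ i * η i := by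
    split_ifs with h
    · simp [h]
    · rfl
  have g₂ : (if ξ = 0 then 0 else p * na ξ ^ (p - 2) * (A.mulVec ξ ⬝ᵥ η))
      = p * na ξ ^ (p - 2) * (A.mulVec ξ ⬝ᵥ η) := by
    split_ifs with h
    · simp [h]
    · rfl
  rw [g₁, g₂, Hnp, Hnp]
  have d₁ := mul_le_mul_of_nonneg_left c₁ hC₁.le
  have d₂ := mul_le_mul_of_nonneg_left c₂ hC₂.le
  linarith
end

section
/- Let 1 < p < ∞ with p ≠ n. Let H be a norm on ℝⁿ differentiable on ℝⁿ\{0}, let H₀(x) := sup_{ξ ≠ 0} ⟪x, ξ⟫ / H(ξ) denote its dual norm, and assume H₀ is differentiable on ℝⁿ\{0}. Define G(x) := H₀(x)^{(p−n)/(p−1)} for x ≠ 0 and A(ξ) := ∇(H^p/p)(ξ) for ξ ≠ 0. Then G is weakly Finsler p-harmonic in ℝⁿ\{0}: for every smooth function φ : ℝⁿ → ℝ whose support is a compact subset of ℝⁿ\{0}, ∫_{ℝⁿ} ⟪A(∇G(x)), ∇φ(x)⟫ dx = 0. -/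
open MeasureTheory RealInnerProductSpace

/-- A function touched from below at `y` by the linear form `⟪v, ·⟫` has gradient `v` there. -/
theorem gradient_eq_of_inner_le {E : Type*} [NormedAddCommGroup E] [InnerProductSpace ℝ E]
    [CompleteSpace E] {f : E → ℝ} {v y : E} (hf : DifferentiableAt ℝ f y)
    (hle : ∀ η, ⟪v, η⟫ ≤ f η) (heq : f y = ⟪v, y⟫) : gradient f y = v := by
  have hd : HasFDerivAt (fun η => f η - ⟪v, η⟫) (fderiv ℝ f y - innerSL ℝ v) y :=
    hf.hasFDerivAt.sub (innerSL ℝ v).hasFDerivAt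
  have hmin : IsLocalMin (fun η => f η - ⟪v, η⟫) y :=
    Filter.Eventually.of_forall fun η => by
      simp only [heq, sub_self]
      linarith [hle η]
  have h0 := hmin.hasFDerivAt_eq_zero hd
  rw [gradient, sub_eq_zero.mp h0]
  exact (InnerProductSpace.toDual ℝ E).symm_apply_apply v

/-- The gradient of a real power of a positive differentiable function. -/
theorem gradient_rpow_const {E : Type*} [NormedAddCommGroup E] [InnerProductSpace ℝ E]
    [CompleteSpace E] {f : E → ℝ} {y : E} (hf : DifferentiableAt ℝ f y) (hy : 0 < f y) (a : ℝ) :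
    gradient (fun η => f η ^ a) y = (a * f y ^ (a - 1)) • gradient f y := by
  rw [gradient, (hf.hasFDerivAt.rpow_const (p := a) (Or.inl hy.ne')).fderiv]
  simp [gradient]

/-- The gradient of `f ^ a / a` for a positive differentiable function `f`. -/
theorem gradient_rpow_const_div {E : Type*} [NormedAddCommGroup E] [InnerProductSpace ℝ E]
    [CompleteSpace E] {f : E → ℝ} {y : E} (hf : DifferentiableAt ℝ f y) (hy : 0 < f y) {a : ℝ}
    (ha : a ≠ 0) :
    gradient (fun η => f η ^ a / a) y = f y ^ (a - 1) • gradient f y := by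
  have h := (hf.hasFDerivAt.rpow_const (p := a) (Or.inl hy.ne')).mul_const a⁻¹
  simp only [← div_eq_mul_inv] at h
  rw [gradient, h.fderiv, smul_smul, inv_mul_cancel_left₀ ha]
  simp [gradient]

/-- A weight that is homogeneous of degree `-dim E` annihilates the radial derivative of every
test function supported away from the origin. -/
theorem integral_mul_fderiv_self_eq_zero {E : Type*} [NormedAddCommGroup E] [NormedSpace ℝ E]
    [FiniteDimensional ℝ E] [MeasurableSpace E] [BorelSpace E] (μ : Measure E)
    [μ.IsAddHaarMeasure] {w φ : E → ℝ} (hw : ContinuousOn w {0}ᶜ)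
    (hhom : ∀ c : ℝ, 0 < c → ∀ x, x ≠ 0 → w (c • x) = (c ^ Module.finrank ℝ E)⁻¹ * w x)
    (hφ : ContDiff ℝ 1 φ) (hc : HasCompactSupport φ) (hs : tsupport φ ⊆ {0}ᶜ) :
    ∫ x, w x * fderiv ℝ φ x x ∂μ = 0 := by
  have hφ0 : φ 0 = 0 := image_eq_zero_of_notMem_tsupport fun h => hs h rfl
  have hwm : Measurable w := measurable_of_continuousOn_compl_singleton 0 hw
  have hcont' : Continuous (fderiv ℝ φ) := hφ.continuous_fderiv one_ne_zero
  have hdiff : Differentiable ℝ φ := hφ.differentiable one_ne_zero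
  obtain ⟨M, hM⟩ := (hc.fderiv (𝕜 := ℝ)).exists_bound_of_continuous hcont'
  set K : Set E := (fun q : ℝ × E => q.1 • q.2) '' (Set.Icc (1 / 2) 2 ×ˢ tsupport φ) with hK
  have hKc : IsCompact K := (isCompact_Icc.prod hc).image (by fun_prop)
  have hK0 : K ⊆ {0}ᶜ := by
    rintro _ ⟨⟨s, y⟩, ⟨hs', hy⟩, rfl⟩
    have hs0 : s ≠ 0 := by have := hs'.1; simp only at this; linarith
    exact smul_ne_zero hs0 (hs hy)
  have hKmem : ∀ t ∈ Metric.ball (1 : ℝ) (1 / 2), ∀ x, t • x ∈ tsupport φ → x ∈ K := by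
    intro t ht x hx
    rw [Metric.mem_ball, Real.dist_eq, abs_lt] at ht
    have htp : 0 < t := by linarith
    refine ⟨(t⁻¹, t • x), ⟨⟨?_, ?_⟩, hx⟩, inv_smul_smul₀ htp.ne' x⟩
    · rw [one_div]
      exact inv_anti₀ htp (by linarith)
    · exact inv_le_of_inv_le₀ (by norm_num) (by linarith)
  have hwK : ContinuousOn w K := hw.mono hK0
  have hint : Integrable (fun x => w x * φ ((1 : ℝ) • x)) μ := by
    refine (integrableOn_iff_integrable_of_support_subset (s := K) fun x hx => ?_).mp
      ((hwK.mul (hφ.continuous.comp (continuous_const_smul _)).continuousOn).integrableOn_compact hKc)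
    exact hKmem 1 (by simp) x (subset_tsupport φ (right_ne_zero_of_mul hx))
  have hbound : Integrable (K.indicator fun x => |w x| * (M * ‖x‖)) μ := by
    rw [integrable_indicator_iff hKc.measurableSet]
    exact (hwK.abs.mul (by fun_prop)).integrableOn_compact hKc
  have hder := (hasDerivAt_integral_of_dominated_loc_of_deriv_le (μ := μ)
    (F := fun t x => w x * φ (t • x)) (F' := fun t x => w x * fderiv ℝ φ (t • x) x)
    (x₀ := (1 : ℝ)) (s := Metric.ball 1 (1 / 2))
    (bound := K.indicator fun x => |w x| * (M * ‖x‖))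
    (Metric.ball_mem_nhds _ (by norm_num))
    (Filter.Eventually.of_forall fun t =>
      (hwm.mul ((hφ.continuous.comp (continuous_const_smul t)).measurable)).aestronglyMeasurable)
    hint
    (hwm.mul (Continuous.measurable (by fun_prop))).aestronglyMeasurable
    (Filter.Eventually.of_forall fun x t ht => by
      by_cases hx : t • x ∈ tsupport φ
      · rw [Set.indicator_of_mem (hKmem t ht x hx), norm_mul, Real.norm_eq_abs]
        exact mul_le_mul_of_nonneg_left
          ((fderiv ℝ φ (t • x)).le_of_opNorm_le (hM _) x) (abs_nonneg _)
      · have h0 : fderiv ℝ φ (t • x) = 0 :=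
          image_eq_zero_of_notMem_tsupport fun h => hx (tsupport_fderiv_subset ℝ h)
        simp only [h0, zero_apply, mul_zero, norm_zero]
        have hM0 : 0 ≤ M := (norm_nonneg _).trans (hM 0)
        exact Set.indicator_nonneg (fun y _ => by positivity) x)
    hbound
    (Filter.Eventually.of_forall fun x t _ => by
      have h1 : HasDerivAt (fun s : ℝ => s • x) x t := by
        simpa using (hasDerivAt_id t).smul_const x
      exact ((hdiff (t • x)).hasFDerivAt.comp_hasDerivAt t h1).const_mul (w x))).2
  have hconst : (fun t : ℝ => ∫ x, w x * φ (t • x) ∂μ) =ᶠ[nhds 1] fun _ => ∫ x, w x * φ x ∂μ := by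
    filter_upwards [lt_mem_nhds (zero_lt_one' ℝ)] with t ht
    have htp : 0 < t ^ Module.finrank ℝ E := pow_pos ht _
    have hfun : (fun x => w x * φ (t • x)) =
        fun x => t ^ Module.finrank ℝ E * (w (t • x) * φ (t • x)) := by
      ext x
      by_cases hx : x = 0
      · simp [hx, hφ0]
      · rw [hhom t ht x hx]
        field_simp
    rw [hfun, integral_const_mul, Measure.integral_comp_smul μ (fun x => w x * φ x),
      abs_of_pos (inv_pos.mpr htp), smul_eq_mul, mul_inv_cancel_left₀ htp.ne']
  have h := hder.unique ((hasDerivAt_const (1 : ℝ) _).congr_of_eventuallyEq hconst)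
  simpa using h

/-- The defining properties of the dual norm `H₀` of a norm `H`: attainment of the supremum and
the duality inequality. -/
theorem dual_norm_attained {E : Type*} [NormedAddCommGroup E] [InnerProductSpace ℝ E]
    [FiniteDimensional ℝ E] [Nontrivial E] {H H₀ : E → ℝ} (Hpos : ∀ ξ, ξ ≠ 0 → 0 < H ξ)
    (Hzero : H 0 = 0) (Hhom : ∀ (c : ℝ) (ξ : E), H (c • ξ) = |c| * H ξ)
    (Hcont : ContinuousOn H {0}ᶜ)
    (hH₀ : ∀ x, H₀ x = ⨆ ξ : {ζ : E // ζ ≠ 0}, ⟪x, (ξ : E)⟫ / H ξ) (x : E) :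
    (∃ ξ, H ξ = 1 ∧ ⟪x, ξ⟫ = H₀ x) ∧ ∀ η, ⟪x, η⟫ ≤ H₀ x * H η := by
  have hsph : ∀ ξ ∈ Metric.sphere (0 : E) 1, ξ ≠ 0 := fun ξ h => ne_zero_of_mem_unit_sphere ⟨ξ, h⟩
  have hco : ContinuousOn (fun ξ => ⟪x, ξ⟫ / H ξ) (Metric.sphere (0 : E) 1) :=
    ContinuousOn.div (by fun_prop) (Hcont.mono hsph) fun ξ hξ => (Hpos ξ (hsph ξ hξ)).ne'
  obtain ⟨ξ, hξ, hmax⟩ := (isCompact_sphere (0 : E) 1).exists_isMaxOn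
    ((NormedSpace.sphere_nonempty (x := (0 : E)) (r := 1)).mpr zero_le_one) hco
  have hle : ∀ η : {ζ : E // ζ ≠ 0}, ⟪x, (η : E)⟫ / H η ≤ ⟪x, ξ⟫ / H ξ := by
    rintro ⟨η, hη⟩
    have hn : 0 < ‖η‖ := norm_pos_iff.mpr hη
    have h1 := hmax (show ‖η‖⁻¹ • η ∈ Metric.sphere (0 : E) 1 by
      simp [norm_smul, hn.ne'])
    simp only [Set.mem_ofPred_eq, Hhom, inner_smul_right, abs_of_pos (inv_pos.mpr hn)] at h1
    rwa [mul_div_mul_left _ _ (inv_pos.mpr hn).ne'] at h1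
  have hξ0 := hsph ξ hξ
  have hHξ := Hpos ξ hξ0
  have hbdd : BddAbove (Set.range fun η : {ζ : E // ζ ≠ 0} => ⟪x, (η : E)⟫ / H η) :=
    ⟨_, Set.forall_mem_range.mpr hle⟩
  have hval : H₀ x = ⟪x, ξ⟫ / H ξ := by
    rw [hH₀]
    have : Nonempty {ζ : E // ζ ≠ 0} := ⟨⟨ξ, hξ0⟩⟩
    exact le_antisymm (ciSup_le hle) (le_ciSup hbdd ⟨ξ, hξ0⟩)
  refine ⟨⟨(H ξ)⁻¹ • ξ, ?_, ?_⟩, fun η => ?_⟩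
  · rw [Hhom, abs_of_pos (inv_pos.mpr hHξ), inv_mul_cancel₀ hHξ.ne']
  · rw [inner_smul_right, hval, div_eq_inv_mul]
  · by_cases hη : η = 0
    · simp [hη, Hzero]
    · rw [← div_le_iff₀ (Hpos η hη), hval]
      exact hle ⟨η, hη⟩

/-- `G(x) := H₀(x)^{(p−n)/(p−1)}` is weakly Finsler
`p`-harmonic in `ℝⁿ \ {0}`. -/
theorem stmt_13 (n : ℕ) (hn : 2 ≤ n) (p : ℝ) (hp : 1 < p) (hpn : p ≠ n)
    (H : EuclideanSpace ℝ (Fin n) → ℝ)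
    (Hnonneg : ∀ ξ, 0 ≤ H ξ)
    (Heq_zero : ∀ ξ, H ξ = 0 ↔ ξ = 0)
    (Hhom : ∀ (c : ℝ) (ξ : EuclideanSpace ℝ (Fin n)), H (c • ξ) = |c| * H ξ)
    (Htri : ∀ ξ η, H (ξ + η) ≤ H ξ + H η)
    (Hdiff : ∀ ξ : EuclideanSpace ℝ (Fin n), ξ ≠ 0 → DifferentiableAt ℝ H ξ)
    -- the dual norm `H₀` and the function `G`:
    (H₀ : EuclideanSpace ℝ (Fin n) → ℝ)
    (hH₀ : ∀ x, H₀ x = ⨆ ξ : {ζ : EuclideanSpace ℝ (Fin n) // ζ ≠ 0}, ⟪x, (ξ : EuclideanSpace ℝ (Fin n))⟫ / H ξ)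
    (hH₀diff : ∀ x : EuclideanSpace ℝ (Fin n), x ≠ 0 → DifferentiableAt ℝ H₀ x)
    (G : EuclideanSpace ℝ (Fin n) → ℝ)
    (hG : ∀ x, G x = H₀ x ^ ((p - n) / (p - 1))) :
    ∀ φ : EuclideanSpace ℝ (Fin n) → ℝ,
      ContDiff ℝ (⊤ : ℕ∞) φ → HasCompactSupport φ →
      tsupport φ ⊆ {(0 : EuclideanSpace ℝ (Fin n))}ᶜ →
      ∫ x, ⟪gradient (fun ζ => H ζ ^ p / p) (gradient G x), gradient φ x⟫ = 0 := by
  intro φ hφ hc hs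
  have : Nonempty (Fin n) := ⟨⟨0, by omega⟩⟩
  have Hpos : ∀ ξ, ξ ≠ 0 → 0 < H ξ := fun ξ h =>
    (Hnonneg ξ).lt_of_ne fun h' => h ((Heq_zero ξ).mp h'.symm)
  have Hzero : H 0 = 0 := (Heq_zero 0).mpr rfl
  have hdual := dual_norm_attained Hpos Hzero Hhom
    (fun ξ h => (Hdiff ξ h).continuousAt.continuousWithinAt) hH₀
  have H₀pos : ∀ x, x ≠ 0 → 0 < H₀ x := fun x hx =>
    pos_of_mul_pos_left ((real_inner_self_pos.mpr hx).trans_le ((hdual x).2 x)) (Hnonneg x)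
  have H₀hom : ∀ c : ℝ, 0 < c → ∀ x, H₀ (c • x) = c * H₀ x := fun c hc x => by
    simp only [hH₀, real_inner_smul_left, mul_div_assoc]
    exact (Real.mul_iSup_of_nonneg hc.le _).symm
  have hp0 : p - 1 ≠ 0 := by linarith
  set α : ℝ := (p - n) / (p - 1) with hα
  have hα0 : α ≠ 0 := div_ne_zero (sub_ne_zero.mpr hpn) hp0
  have hGfun : G = fun x => H₀ x ^ α := funext hG
  have key : ∀ x, x ≠ 0 → gradient (fun ζ => H ζ ^ p / p) (gradient G x) =
      (|α| ^ (p - 1) * SignType.sign α * (H₀ x ^ n)⁻¹) • x := by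
    intro x hx
    have hx0 := H₀pos x hx
    obtain ⟨⟨ξ, hξ1, hξx⟩, hle⟩ := hdual x
    have hξ : gradient H₀ x = ξ := gradient_eq_of_inner_le (hH₀diff x hx)
      (fun η => by
        rw [real_inner_comm]
        simpa [hξ1] using (hdual η).2 ξ)
      (by rw [real_inner_comm, hξx])
    have hξ0 : ξ ≠ 0 := fun h => by simp [h, Hzero] at hξ1
    rw [hGfun, gradient_rpow_const (hH₀diff x hx) hx0, hξ]
    set a : ℝ := α * H₀ x ^ (α - 1) with ha
    have hr : 0 < H₀ x ^ (α - 1) := Real.rpow_pos_of_pos hx0 _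
    have ha0 : a ≠ 0 := mul_ne_zero hα0 hr.ne'
    have hy : a • ξ ≠ 0 := smul_ne_zero ha0 hξ0
    have hsign : (SignType.sign α : ℝ) * a = |a| := by
      rw [ha, abs_mul, abs_of_pos hr, ← mul_assoc, sign_mul_self]
    have hHa : H (a • ξ) = |a| := by rw [Hhom, hξ1, mul_one]
    have hgrad : gradient H (a • ξ) = ((SignType.sign α : ℝ) * (H₀ x)⁻¹) • x := by
      refine gradient_eq_of_inner_le (Hdiff _ hy) (fun η => ?_) ?_
      · have h1 := hle ((SignType.sign α : ℝ) • η)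
        have h2 : |(SignType.sign α : ℝ)| = 1 := by
          rcases lt_or_gt_of_ne hα0 with h | h <;> simp [h]
        rw [Hhom, h2, one_mul, inner_smul_right] at h1
        rw [real_inner_smul_left, mul_right_comm, mul_inv_le_iff₀ hx0]
        linarith
      · rw [hHa, real_inner_smul_left, inner_smul_right, hξx, ← hsign]
        field_simp
    rw [gradient_rpow_const_div (Hdiff _ hy) (Hpos _ hy) (by linarith), hgrad, hHa, smul_smul]
    congr 1
    rw [ha, abs_mul, abs_of_pos hr, Real.mul_rpow (abs_nonneg _) hr.le, ← Real.rpow_mul hx0.le]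
    have he : (α - 1) * (p - 1) = 1 - n := by
      rw [hα]
      field_simp
      ring
    rw [he, Real.rpow_sub hx0, Real.rpow_one, Real.rpow_natCast]
    field_simp
  have hφ1 : ContDiff ℝ 1 φ := hφ.of_le (by exact_mod_cast le_top)
  have hzero : gradient φ 0 = 0 := by
    have h0 : fderiv ℝ φ 0 = 0 :=
      image_eq_zero_of_notMem_tsupport fun h => hs (tsupport_fderiv_subset ℝ h) rfl
    simp [gradient, h0]
  have hint : ∀ x, ⟪gradient (fun ζ => H ζ ^ p / p) (gradient G x), gradient φ x⟫ =
      |α| ^ (p - 1) * SignType.sign α * ((H₀ x ^ n)⁻¹ * fderiv ℝ φ x x) := by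
    intro x
    by_cases hx : x = 0
    · simp [hx, hzero]
    · rw [key x hx, real_inner_smul_left, real_inner_comm, gradient,
        InnerProductSpace.toDual_symm_apply, mul_assoc]
  simp only [hint, integral_const_mul]
  rw [integral_mul_fderiv_self_eq_zero volume ?_ ?_ hφ1 hc hs, mul_zero]
  · intro x hx
    exact (((hH₀diff x hx).continuousAt.pow n).inv₀
      (pow_pos (H₀pos x hx) n).ne').continuousWithinAt
  · intro c hc x _
    rw [H₀hom c hc, mul_pow, mul_inv, finrank_euclideanSpace, Fintype.card_fin]
end
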